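/- arXiv:1506.06539 — 2 statements merged into one kernel-verified Lean document; each statement's English description precedes it below -/
import Mathlib

section
/- Fix c ∈ ℂ with c ≠ 0, a square root √c, and N ≥ 1. Let λ_1,…,λ_N be pairwise distinct with λ_m−λ_j±ic ≠ 0, and let μ_1,…,μ_{N−1}, λ_p, λ_s be fixed complex numbers satisfying the nondegeneracy hypotheses (for both expressions below). Then, as μ_N → ∞, F(μ_1,…,μ_N; λ_1,…,λ_N; λ_p,λ_s) → 2i√c · G(μ_1,…,μ_{N−1}; λ_1,…,λ_N; λ_p,λ_s). -/
open Complex Finset Matrix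

namespace LL

noncomputable def Kk (c x y : ℂ) : ℂ := 2 * c / ((x - y) ^ 2 + c ^ 2)

noncomputable def Vp {N M : ℕ} (c : ℂ) (μ : Fin N → ℂ) (lam : Fin M → ℂ) (x : ℂ) : ℂ :=
  (∏ m, (μ m - x + I * c)) / ∏ m, (lam m - x + I * c)

noncomputable def Vm {N M : ℕ} (c : ℂ) (μ : Fin N → ℂ) (lam : Fin M → ℂ) (x : ℂ) : ℂ :=
  (∏ m, (μ m - x - I * c)) / ∏ m, (lam m - x - I * c)

noncomputable def Xi {N M : ℕ} (μ : Fin N → ℂ) (lam : Fin M → ℂ) (j : Fin M) : ℂ :=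
  (∏ m, (μ m - lam j)) / ∏ m ∈ Finset.univ.erase j, (lam m - lam j)

noncomputable def Umat {N M : ℕ} (c : ℂ) (μ : Fin N → ℂ) (lam : Fin M → ℂ) (lp ls : ℂ) :
    Matrix (Fin M) (Fin M) ℂ := fun j k =>
  I / (Vp c μ lam (lam j) - Vm c μ lam (lam j)) * Xi μ lam j *
    (Kk c (lam j) (lam k) - Kk c lp (lam k) * Kk c ls (lam j))

noncomputable def U1mat {N M : ℕ} (c : ℂ) (μ : Fin N → ℂ) (lam : Fin M → ℂ) (lp : ℂ) :
    Matrix (Fin M) (Fin M) ℂ := fun j k =>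
  I / (Vp c μ lam (lam j) - Vm c μ lam (lam j)) * Xi μ lam j *
    (Kk c (lam j) (lam k) - Kk c lp (lam k))

noncomputable def U2mat {N M : ℕ} (c : ℂ) (μ : Fin N → ℂ) (lam : Fin M → ℂ) (lp : ℂ) :
    Matrix (Fin M) (Fin M) ℂ := fun j k =>
  U1mat c μ lam lp j k + I / (Vp c μ lam (lam j) - Vm c μ lam (lam j)) * Kk c lp (lam k)

noncomputable def HR {N M : ℕ} (c sc : ℂ) (R : ℕ) (μ : Fin N → ℂ) (lam : Fin M → ℂ)
    (lp ls : ℂ) : ℂ :=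
  (I * sc) ^ R / (c ^ (2 * R - 1) * ((R - 1).factorial : ℂ)) * (-1 : ℂ) ^ (N * (R - 1)) *
    (∏ j, ∏ k, (lam j - lam k + I * c)) *
    (∏ j, ∏ k, (lam j - μ k)⁻¹) *
    (∏ j, (Vp c μ lam (lam j) - Vm c μ lam (lam j))) *
    (1 + Umat c μ lam lp ls).det /
    ((Vp c μ lam lp - Vm c μ lam lp) * (Vp c μ lam ls - Vm c μ lam ls))

noncomputable def Jcal {N : ℕ} (μ lam : Fin N → ℂ) : ℂ :=
  (∑ j, lam j - ∑ j, μ j) ^ 4 -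
    4 * (∑ j, lam j - ∑ j, μ j) * (∑ j, lam j ^ 3 - ∑ j, μ j ^ 3) +
    3 * (∑ j, lam j ^ 2 - ∑ j, μ j ^ 2) ^ 2

noncomputable def Fff {N : ℕ} (c : ℂ) (μ lam : Fin N → ℂ) (lp ls : ℂ) : ℂ :=
  (-1 : ℂ) ^ N * (Jcal μ lam / (6 * c)) *
    (∏ j, ∏ k, (lam j - lam k + I * c)) *
    (∏ j, ∏ k, (lam j - μ k)⁻¹) *
    (∏ j, (Vp c μ lam (lam j) - Vm c μ lam (lam j))) *
    (1 + Umat c μ lam lp ls).det /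
    ((Vp c μ lam lp - Vm c μ lam lp) * (Vp c μ lam ls - Vm c μ lam ls))

noncomputable def Tcal {N M : ℕ} (μ : Fin N → ℂ) (lam : Fin M → ℂ) : ℂ :=
  (1 / 2 : ℂ) * ((∑ j, lam j - ∑ j, μ j) ^ 2 - (∑ j, lam j ^ 2 - ∑ j, μ j ^ 2))

noncomputable def Gff {N M : ℕ} (c sc : ℂ) (μ : Fin N → ℂ) (lam : Fin M → ℂ) (lp ls : ℂ) : ℂ :=
  -I * (Tcal μ lam / (c * sc)) *
    (∏ j, ∏ k, (lam j - lam k + I * c)) *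
    (∏ j, ∏ k, (lam j - μ k)⁻¹) *
    (∏ j, (Vp c μ lam (lam j) - Vm c μ lam (lam j))) *
    (1 + Umat c μ lam lp ls).det /
    ((Vp c μ lam lp - Vm c μ lam lp) * (Vp c μ lam ls - Vm c μ lam ls))

noncomputable def fsc (c x y : ℂ) : ℂ := (x - y + I * c) / (x - y)

noncomputable def stringRap (cb : ℝ) (M : ℕ) (δ : Fin M → ℂ) (j : Fin M) : ℂ :=
  I * ((cb : ℂ) / 2) * ((M : ℂ) - 1 - 2 * (j.val : ℂ)) + I * δ j

end LL

open LL

/-!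
As functions of `x = μ_N`, all factors of `F` are asymptotic to powers of `x` times the same factors
without `μ_N`. Adjoining `x` multiplies `V^±` and the products `∏ (μ_m - λ_j)` by factors of order
`x`; these cancel in the entries of `U`, so the determinant converges. The product of the
`(λ_j - μ_k)⁻¹` acquires a factor of order `(-x) ^ (-N)`, that of the `V⁺_j - V⁻_j` one of order
`x ^ N`, the denominator one of order `x ^ 2`, and in `𝒥` the powers `x ^ 4` and `x ^ 3` cancel,
leaving `12 𝒯 x ^ 2`. The total power of `x` is `0`, and the coefficient is `2i√c G`.
-/

open Filter Topology Bornology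

/-- `f x = a * x ^ d + o(x ^ d)` as `x → ∞` in a normed field. The coefficient `a` may vanish, so
`d` only bounds the order of growth of `f` from above. -/
def HasLeadingTerm {𝕜 : Type*} [NormedField 𝕜] (f : 𝕜 → 𝕜) (d : ℤ) (a : 𝕜) : Prop :=
  Tendsto (fun x => f x / x ^ d) (cobounded 𝕜) (𝓝 a)

section HasLeadingTerm

variable {𝕜 : Type*} [NormedField 𝕜] {f g : 𝕜 → 𝕜} {d e : ℤ} {a b : 𝕜}

theorem hasLeadingTerm_zero_iff : HasLeadingTerm f 0 a ↔ Tendsto f (cobounded 𝕜) (𝓝 a) := by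
  simp [HasLeadingTerm]

theorem hasLeadingTerm_const (b : 𝕜) : HasLeadingTerm (fun _ => b) 0 b :=
  hasLeadingTerm_zero_iff.2 tendsto_const_nhds

theorem hasLeadingTerm_id : HasLeadingTerm (fun x : 𝕜 => x) 1 1 := by
  refine tendsto_const_nhds.congr' ?_
  filter_upwards [eventually_ne_cobounded (0 : 𝕜)] with x hx
  rw [zpow_one, div_self hx]

namespace HasLeadingTerm

theorem add (hf : HasLeadingTerm f d a) (hg : HasLeadingTerm g d b) :
    HasLeadingTerm (fun x => f x + g x) d (a + b) :=
  (Tendsto.add hf hg).congr fun _ => (add_div ..).symm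

theorem sub (hf : HasLeadingTerm f d a) (hg : HasLeadingTerm g d b) :
    HasLeadingTerm (fun x => f x - g x) d (a - b) :=
  (Tendsto.sub hf hg).congr fun _ => (sub_div ..).symm

theorem mul (hf : HasLeadingTerm f d a) (hg : HasLeadingTerm g e b) :
    HasLeadingTerm (fun x => f x * g x) (d + e) (a * b) := by
  refine (Tendsto.mul hf hg).congr' ?_
  filter_upwards [eventually_ne_cobounded (0 : 𝕜)] with x hx
  rw [zpow_add₀ hx, div_mul_div_comm]

theorem const_mul (b : 𝕜) (hf : HasLeadingTerm f d a) :
    HasLeadingTerm (fun x => b * f x) d (b * a) :=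
  (Tendsto.const_mul b hf).congr fun _ => (mul_div_assoc ..).symm

theorem mul_const (hf : HasLeadingTerm f d a) (b : 𝕜) :
    HasLeadingTerm (fun x => f x * b) d (a * b) :=
  (Tendsto.mul_const b hf).congr fun _ => div_mul_eq_mul_div ..

theorem div_const (hf : HasLeadingTerm f d a) (b : 𝕜) :
    HasLeadingTerm (fun x => f x / b) d (a / b) := by
  simpa only [div_eq_mul_inv] using hf.mul_const b⁻¹

theorem inv (hf : HasLeadingTerm f d a) (ha : a ≠ 0) :
    HasLeadingTerm (fun x => (f x)⁻¹) (-d) a⁻¹ :=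
  (Tendsto.inv₀ hf ha).congr fun x => by rw [_root_.zpow_neg, inv_div_inv, inv_div]

theorem div (hf : HasLeadingTerm f d a) (hg : HasLeadingTerm g e b) (hb : b ≠ 0) :
    HasLeadingTerm (fun x => f x / g x) (d - e) (a / b) := by
  simpa only [div_eq_mul_inv, sub_eq_add_neg] using hf.mul (hg.inv hb)

theorem prod {ι : Type*} (s : Finset ι) {f : ι → 𝕜 → 𝕜} {d : ι → ℤ} {a : ι → 𝕜}
    (h : ∀ i ∈ s, HasLeadingTerm (f i) (d i) (a i)) :
    HasLeadingTerm (fun x => ∏ i ∈ s, f i x) (∑ i ∈ s, d i) (∏ i ∈ s, a i) := by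
  induction s using Finset.cons_induction with
  | empty => simpa using hasLeadingTerm_const (1 : 𝕜)
  | cons i s hi ih =>
    simp only [Finset.prod_cons, Finset.sum_cons, Finset.forall_mem_cons] at h ⊢
    exact h.1.mul (ih h.2)

theorem of_lt (hf : HasLeadingTerm f d a) (hde : d < e) : HasLeadingTerm f e 0 := by
  obtain ⟨k, rfl⟩ := Int.exists_add_of_le hde.le
  have hk : k ≠ 0 := by lia
  have hpow : Tendsto (fun x : 𝕜 => x⁻¹ ^ k) (cobounded 𝕜) (𝓝 0) := by
    simpa [hk] using (tendsto_inv₀_cobounded (α := 𝕜)).pow k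
  have hmul : Tendsto (fun x => f x / x ^ d * x⁻¹ ^ k) (cobounded 𝕜) (𝓝 0) := by
    simpa using Tendsto.mul hf hpow
  refine hmul.congr' ?_
  filter_upwards [eventually_ne_cobounded (0 : 𝕜)] with x hx
  rw [zpow_add₀ hx, zpow_natCast, inv_pow, ← div_eq_mul_inv, div_div]

theorem add_const (hf : HasLeadingTerm f d a) (hd : 0 < d) (b : 𝕜) :
    HasLeadingTerm (fun x => f x + b) d a := by
  simpa only [add_zero] using hf.add ((hasLeadingTerm_const b).of_lt hd)

theorem sub_const (hf : HasLeadingTerm f d a) (hd : 0 < d) (b : 𝕜) :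
    HasLeadingTerm (fun x => f x - b) d a := by
  simpa only [sub_eq_add_neg] using hf.add_const hd (-b)

end HasLeadingTerm

end HasLeadingTerm

namespace LL

section Snoc

variable {n M : ℕ} (c : ℂ) (μ : Fin n → ℂ) (lam : Fin M → ℂ)

theorem Vp_snoc (x z : ℂ) : Vp c (Fin.snoc μ x) lam z = Vp c μ lam z * (x - z + I * c) := by
  simp [Vp, Fin.prod_univ_castSucc (n := n), div_mul_eq_mul_div]

theorem Vm_snoc (x z : ℂ) : Vm c (Fin.snoc μ x) lam z = Vm c μ lam z * (x - z - I * c) := by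
  simp [Vm, Fin.prod_univ_castSucc (n := n), div_mul_eq_mul_div]

theorem Xi_snoc (x : ℂ) (j : Fin M) : Xi (Fin.snoc μ x) lam j = Xi μ lam j * (x - lam j) := by
  simp [Xi, Fin.prod_univ_castSucc (n := n), div_mul_eq_mul_div]

theorem neg_one_pow_mul_prod_prod_inv_sub_snoc (x : ℂ) :
    (-1) ^ M * ∏ j, ∏ k, (lam j - (Fin.snoc μ x : Fin (n + 1) → ℂ) k)⁻¹ =
      (∏ j, ∏ k, (lam j - μ k)⁻¹) * ∏ j, (x - lam j)⁻¹ := by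
  have hsign : ∏ j, (x - lam j)⁻¹ = (-1) ^ M * ∏ j, (lam j - x)⁻¹ := by
    simp only [← neg_sub (lam _) x, inv_neg, Finset.prod_neg, Finset.card_univ, Fintype.card_fin]
  simp only [hsign, Fin.prod_univ_castSucc (n := n), Fin.snoc_castSucc, Fin.snoc_last,
    Finset.prod_mul_distrib, mul_left_comm]

theorem hasLeadingTerm_Vp_sub_Vm (z : ℂ) :
    HasLeadingTerm (fun x => Vp c (Fin.snoc μ x) lam z - Vm c (Fin.snoc μ x) lam z) 1
      (Vp c μ lam z - Vm c μ lam z) := by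
  have hx : HasLeadingTerm (fun x : ℂ => x - z) 1 1 := hasLeadingTerm_id.sub_const one_pos z
  simpa only [Vp_snoc, Vm_snoc, mul_one] using
    ((hx.add_const one_pos (I * c)).const_mul (Vp c μ lam z)).sub
      ((hx.sub_const one_pos (I * c)).const_mul (Vm c μ lam z))

theorem hasLeadingTerm_Xi (j : Fin M) :
    HasLeadingTerm (fun x => Xi (Fin.snoc μ x) lam j) 1 (Xi μ lam j) := by
  simpa only [Xi_snoc, mul_one] using
    (hasLeadingTerm_id.sub_const one_pos (lam j)).const_mul (Xi μ lam j)

theorem hasLeadingTerm_neg_one_pow_mul_prod_prod_inv_sub :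
    HasLeadingTerm
      (fun x => (-1) ^ M * ∏ j, ∏ k, (lam j - (Fin.snoc μ x : Fin (n + 1) → ℂ) k)⁻¹) (-M)
      (∏ j, ∏ k, (lam j - μ k)⁻¹) := by
  have hprod : HasLeadingTerm (fun x => ∏ j, (x - lam j)⁻¹) (-M) 1 := by
    simpa using HasLeadingTerm.prod univ fun j _ =>
      (hasLeadingTerm_id.sub_const one_pos (lam j)).inv one_ne_zero
  simpa only [neg_one_pow_mul_prod_prod_inv_sub_snoc, mul_one] using
    hprod.const_mul (∏ j, ∏ k, (lam j - μ k)⁻¹)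

theorem tendsto_Umat_apply (lp ls : ℂ) {j : Fin M}
    (hV : Vp c μ lam (lam j) ≠ Vm c μ lam (lam j)) (k : Fin M) :
    Tendsto (fun x => Umat c (Fin.snoc μ x) lam lp ls j k) (cobounded ℂ)
      (𝓝 (Umat c μ lam lp ls j k)) :=
  hasLeadingTerm_zero_iff.1 <|
    (((hasLeadingTerm_const I).div (hasLeadingTerm_Vp_sub_Vm c μ lam (lam j))
      (sub_ne_zero.2 hV)).mul (hasLeadingTerm_Xi μ lam j)).mul_const
        (Kk c (lam j) (lam k) - Kk c lp (lam k) * Kk c ls (lam j))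

theorem tendsto_det_one_add_Umat (lp ls : ℂ)
    (hV : ∀ j, Vp c μ lam (lam j) ≠ Vm c μ lam (lam j)) :
    Tendsto (fun x => (1 + Umat c (Fin.snoc μ x) lam lp ls).det) (cobounded ℂ)
      (𝓝 (1 + Umat c μ lam lp ls).det) := by
  have hU : Tendsto (fun x => Umat c (Fin.snoc μ x) lam lp ls) (cobounded ℂ)
      (𝓝 (Umat c μ lam lp ls)) :=
    tendsto_pi_nhds.2 fun j => tendsto_pi_nhds.2 fun k =>
      tendsto_Umat_apply c μ lam lp ls (hV j) k
  exact (continuous_id.matrix_det.tendsto _).comp (hU.const_add 1)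

theorem two_mul_I_mul_Gff {sc : ℂ} (hsc : sc ≠ 0) (lp ls : ℂ) :
    2 * I * sc * Gff c sc μ lam lp ls =
      2 * Tcal μ lam / c * (∏ j, ∏ k, (lam j - lam k + I * c)) *
        (∏ j, ∏ k, (lam j - μ k)⁻¹) * (∏ j, (Vp c μ lam (lam j) - Vm c μ lam (lam j))) *
        (1 + Umat c μ lam lp ls).det /
        ((Vp c μ lam lp - Vm c μ lam lp) * (Vp c μ lam ls - Vm c μ lam ls)) := by
  have hT : 2 * I * sc * (-I * (Tcal μ lam / (c * sc))) = 2 * Tcal μ lam / c := by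
    rw [← div_div]
    linear_combination (-2 * Tcal μ lam / c) * (I ^ 2 * mul_inv_cancel₀ hsc + I_sq)
  rw [← hT, Gff]
  ring

end Snoc

-- With `P`, `E`, `Q` the differences of power sums without `x`, this expands
-- `(P - x) ^ 4 - 4 * (P - x) * (Q - x ^ 3) + 3 * (E - x ^ 2) ^ 2`.
theorem exists_Jcal_snoc_eq {n : ℕ} (μ : Fin n → ℂ) (lam : Fin (n + 1) → ℂ) :
    ∃ b₁ b₀ : ℂ, ∀ x, Jcal (Fin.snoc μ x) lam = (12 * Tcal μ lam * x + b₁) * x + b₀ := by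
  let P := ∑ j, lam j - ∑ j, μ j
  let E := ∑ j, lam j ^ 2 - ∑ j, μ j ^ 2
  let Q := ∑ j, lam j ^ 3 - ∑ j, μ j ^ 3
  refine ⟨4 * Q - 4 * P ^ 3, P ^ 4 - 4 * P * Q + 3 * E ^ 2, fun x => ?_⟩
  have hsum (m : ℕ) : ∑ j, (Fin.snoc μ x : Fin (n + 1) → ℂ) j ^ m = ∑ j, μ j ^ m + x ^ m := by
    simp [Fin.sum_univ_castSucc (n := n)]
  simp only [Jcal, Tcal, Fin.sum_snoc, hsum, P, E, Q]
  ring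

theorem hasLeadingTerm_Jcal {n : ℕ} (μ : Fin n → ℂ) (lam : Fin (n + 1) → ℂ) :
    HasLeadingTerm (fun x => Jcal (Fin.snoc μ x) lam) 2 (12 * Tcal μ lam) := by
  obtain ⟨b₁, b₀, hJ⟩ := exists_Jcal_snoc_eq μ lam
  simpa only [hJ, mul_one, one_add_one_eq_two] using
    (((hasLeadingTerm_id.const_mul (12 * Tcal μ lam)).add_const one_pos b₁).mul
      hasLeadingTerm_id).add_const two_pos b₀

end LL

/-- Asymptotics (property 2 with `h = 2, k = 2`): as `μ_N → ∞`, the determinant formula `F`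
for the form factor of `(Ψ†(0))²Ψ²(0)` (built from `N` μ's and `N` λ's) tends to
`2i√c · G(μ₁,…,μ_{N−1}; λ₁,…,λ_N)`. -/
theorem F_tendsto_at_infty {n : ℕ} (c sc : ℂ) (hc : c ≠ 0) (hsc : sc ^ 2 = c)
    (μ0 : Fin n → ℂ) (lam : Fin (n + 1) → ℂ) (hinj : Function.Injective lam)
    (lp ls : ℂ)
    (hmulam : ∀ k j, μ0 k ≠ lam j)
    (hpm : ∀ j k, lam j - lam k + I * c ≠ 0 ∧ lam j - lam k - I * c ≠ 0)
    (hp1 : ∀ j, (lp - lam j) ^ 2 + c ^ 2 ≠ 0)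
    (hs1 : ∀ j, (ls - lam j) ^ 2 + c ^ 2 ≠ 0)
    (hVred : ∀ j, Vp c μ0 lam (lam j) ≠ Vm c μ0 lam (lam j))
    (hVredp : Vp c μ0 lam lp ≠ Vm c μ0 lam lp)
    (hVreds : Vp c μ0 lam ls ≠ Vm c μ0 lam ls) :
    Filter.Tendsto (fun x : ℂ => Fff c (Fin.snoc μ0 x) lam lp ls)
      (Bornology.cobounded ℂ ⊓ Filter.principal
        {x : ℂ |
          (∀ j, x ≠ lam j) ∧
          (∀ j, Vp c (Fin.snoc μ0 x) lam (lam j) ≠ Vm c (Fin.snoc μ0 x) lam (lam j)) ∧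
          Vp c (Fin.snoc μ0 x) lam lp ≠ Vm c (Fin.snoc μ0 x) lam lp ∧
          Vp c (Fin.snoc μ0 x) lam ls ≠ Vm c (Fin.snoc μ0 x) lam ls})
      (nhds (2 * I * sc * Gff c sc μ0 lam lp ls)) := by
  have hsc₀ : sc ≠ 0 := ne_zero_pow two_ne_zero (hsc ▸ hc)
  have hJ : HasLeadingTerm (fun x => Jcal (Fin.snoc μ0 x) lam / (6 * c)) 2
      (2 * Tcal μ0 lam / c) := by
    convert (hasLeadingTerm_Jcal μ0 lam).div_const (6 * c) using 1
    ring
  have hR := hasLeadingTerm_neg_one_pow_mul_prod_prod_inv_sub μ0 lam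
  have hV := HasLeadingTerm.prod univ fun j _ => hasLeadingTerm_Vp_sub_Vm c μ0 lam (lam j)
  have hD := hasLeadingTerm_zero_iff.2 (tendsto_det_one_add_Umat c μ0 lam lp ls hVred)
  have hden := (hasLeadingTerm_Vp_sub_Vm c μ0 lam lp).mul (hasLeadingTerm_Vp_sub_Vm c μ0 lam ls)
  have hden₀ := mul_ne_zero (sub_ne_zero.2 hVredp) (sub_ne_zero.2 hVreds)
  have hF := ((((hJ.mul_const (∏ j, ∏ k, (lam j - lam k + I * c))).mul hR).mul hV).mul hD).div
    hden hden₀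
  rw [two_mul_I_mul_Gff c μ0 lam hsc₀]
  refine (hasLeadingTerm_zero_iff.1 ?_).mono_left inf_le_left
  convert hF using 1
  · ext x
    rw [Fff]
    ring
  · rw [Fin.sum_const, nsmul_one]
    ring
end

section
/- Fix c ∈ ℂ with c ≠ 0 and N ≥ 1. Let μ_1,…,μ_N and pairwise distinct λ_1,…,λ_N be complex numbers satisfying μ_k ≠ λ_j and λ_m−λ_j±ic ≠ 0, let λ_p, λ_s be admissible auxiliary parameters, and assume P_λ ≠ P_μ, where P_λ = Σ_j λ_j and P_μ = Σ_j μ_j. Then (−1)^N (𝒥/(6c))·Π·∏_{j=1}^{N}(V⁺_j−V⁻_j)·det_N(δ_{jk}+U_{jk})/[(V⁺_p−V⁻_p)(V⁺_s−V⁻_s)] = (−1)^{N+1}·[i𝒥/(6c(P_λ−P_μ))]·Π·∏_{j=1}^{N}(V⁺_j−V⁻_j)·det_N(δ_{jk}+U^{(1)}_{jk})/(V⁺_p−V⁻_p), where Π = ∏_{j,k=1}^{N}(λ_j−λ_k+ic)·∏_{j,k=1}^{N}(λ_j−μ_k)^{−1}. -/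
open Complex Finset Matrix

open LL

/-!
The matrices `1 + U` and `1 + U⁽¹⁾` are perturbations `A - x vᵀ` and `A - y vᵀ` of one matrix `A`
by rank-one terms with the same `v_k = K(λ_p, λ_k)`. Interpolating the monic polynomial with roots
`μ_m` at the nodes `λ_j` gives `∑ Ξ_j = P_μ - P_λ` and the partial fractions
`V⁺(z) - V⁻(z) = -i ∑ Ξ_j K(z, λ_j)`. At `z = λ_k` the latter says that `w_j = V⁺_j - V⁻_j` is a
left null vector of `A`. For such `w`, `det (A - x vᵀ)` is proportional to `w ⬝ x`, so the two
determinants are in the ratio of `w ⬝ x = -(V⁺_s - V⁻_s)` to `w ⬝ y = i (P_μ - P_λ)`.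
-/

namespace LL

open Polynomial Lagrange

section Interpolation

variable {F ι : Type*} [Field F] {s : Finset ι} {v : ι → F} {f : F[X]}

lemma degree_sub_nodal_lt (hf : f.Monic) (hdeg : f.natDegree = #s) :
    (f - nodal s v).degree < #s := by
  have hdeg' : f.degree = #s := by rw [degree_eq_natDegree hf.ne_zero, hdeg]
  rw [← hdeg']
  exact degree_sub_lt_left (hdeg'.trans degree_nodal.symm) hf.ne_zero
    (hf.leadingCoeff.trans nodal_monic.leadingCoeff.symm)

lemma eval_sub_nodal_of_mem {i : ι} (hi : i ∈ s) :
    (f - nodal s v).eval (v i) = f.eval (v i) := by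
  rw [eval_sub, eval_nodal_at_node hi, sub_zero]

variable [DecidableEq ι]

lemma sum_nodalWeight_mul_eval (hv : Set.InjOn v s) (hf : f.Monic) (hdeg : f.natDegree = #s) :
    ∑ i ∈ s, nodalWeight s v i * f.eval (v i) = f.nextCoeff + ∑ i ∈ s, v i := by
  have hnodal : (nodal s v).nextCoeff = -∑ i ∈ s, v i := prod_X_sub_C_nextCoeff v
  rcases s.eq_empty_or_nonempty with rfl | hs
  · simp [nextCoeff, hdeg]
  have hpos : 0 < #s := hs.card_pos
  rw [nextCoeff_of_natDegree_pos (by rwa [natDegree_nodal]), natDegree_nodal] at hnodal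
  have hcoeff := coeff_eq_sum hv (degree_sub_nodal_lt (v := v) hf hdeg)
  rw [coeff_sub, hnodal, sub_neg_eq_add] at hcoeff
  rw [nextCoeff_of_natDegree_pos (by rwa [hdeg]), hdeg, hcoeff]
  refine Finset.sum_congr rfl fun i hi => ?_
  rw [eval_sub_nodal_of_mem hi, nodalWeight, Finset.prod_inv_distrib, div_eq_inv_mul]

lemma eval_div_eval_nodal (hv : Set.InjOn v s) (hf : f.Monic) (hdeg : f.natDegree = #s)
    {z : F} (hz : ∀ i ∈ s, z ≠ v i) :
    f.eval z / (nodal s v).eval z =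
      1 + ∑ i ∈ s, nodalWeight s v i * f.eval (v i) * (z - v i)⁻¹ := by
  have hinterp := congrArg (eval z) (eq_interpolate hv (degree_sub_nodal_lt (v := v) hf hdeg))
  rw [eval_interpolate_not_at_node _ hz, eval_sub, sub_eq_iff_eq_add'] at hinterp
  rw [div_eq_iff (eval_nodal_not_at_node hz), hinterp, add_mul, one_mul, mul_comm (eval z _)]
  congr 2
  refine Finset.sum_congr rfl fun i hi => ?_
  rw [eval_sub_nodal_of_mem hi, mul_right_comm]

end Interpolation

section LinearAlgebra

variable {R n : Type*} [CommRing R] [Fintype n] [DecidableEq n]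

-- The combination of the rows of `A - x vᵀ` with coefficients `w` is a multiple of `v`; once `v`
-- stands in row `k`, subtracting multiples of it restores the other rows of `A`.
lemma mul_det_sub_vecMulVec {A : Matrix n n R} {w : n → R} (hw : w ᵥ* A = 0) (x v : n → R)
    (k : n) :
    w k * (A - vecMulVec x v).det = -(w ⬝ᵥ x) * (A.updateRow k v).det := by
  have hcomb : ∑ i, w i • (A - vecMulVec x v) i = -(w ⬝ᵥ x) • v := by
    rw [← vecMul_eq_sum, vecMul_sub, hw, vecMul_vecMulVec, zero_sub, neg_smul]
  rw [← smul_eq_mul, ← det_updateRow_sum, hcomb, det_updateRow_smul]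
  congr 1
  refine det_eq_of_forall_row_eq_smul_add_const (fun i => if i = k then 0 else -x i) k
    (if_pos rfl) fun i j => ?_
  by_cases hi : i = k
  · simp [hi]
  · simp [hi, vecMulVec_apply, sub_eq_add_neg]

lemma dotProduct_mul_det_sub_vecMulVec [NoZeroDivisors R] {A : Matrix n n R} {w : n → R}
    (hw : w ᵥ* A = 0) (x y v : n → R) :
    (w ⬝ᵥ y) * (A - vecMulVec x v).det = (w ⬝ᵥ x) * (A - vecMulVec y v).det := by
  rcases eq_or_ne w 0 with rfl | hne
  · simp
  obtain ⟨k, hk⟩ := Function.ne_iff.mp hne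
  refine mul_left_cancel₀ hk ?_
  linear_combination (w ⬝ᵥ y) * mul_det_sub_vecMulVec hw x v k -
    (w ⬝ᵥ x) * mul_det_sub_vecMulVec hw y v k

end LinearAlgebra

section RankOnePerturbations

variable {N M : ℕ} {c : ℂ} {μ : Fin N → ℂ} {lam : Fin M → ℂ}

/-- The jump `V⁺_j - V⁻_j` at the points `λ_j`, as a vector indexed by `j`. It is a
left null vector of `bareMatrix`. -/
noncomputable def jump (c : ℂ) (μ : Fin N → ℂ) (lam : Fin M → ℂ) : Fin M → ℂ := fun j =>
  Vp c μ lam (lam j) - Vm c μ lam (lam j)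

/-- The factor `i Ξ_j / (V⁺_j - V⁻_j)` common to the `j`-th rows of `U` and `U⁽¹⁾`. -/
noncomputable def rowFactor (c : ℂ) (μ : Fin N → ℂ) (lam : Fin M → ℂ) : Fin M → ℂ := fun j =>
  I / jump c μ lam j * Xi μ lam j

/-- The matrix `δ_{jk} + i Ξ_j K(λ_j, λ_k) / (V⁺_j - V⁻_j)`: what remains of `1 + U` and of
`1 + U⁽¹⁾` without the rank-one terms that carry the auxiliary parameters. -/
noncomputable def bareMatrix (c : ℂ) (μ : Fin N → ℂ) (lam : Fin M → ℂ) :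
    Matrix (Fin M) (Fin M) ℂ :=
  1 + of fun j k => rowFactor c μ lam j * Kk c (lam j) (lam k)

lemma one_add_Umat (lp ls : ℂ) :
    1 + Umat c μ lam lp ls = bareMatrix c μ lam -
      vecMulVec (fun j => rowFactor c μ lam j * Kk c ls (lam j)) fun k => Kk c lp (lam k) := by
  ext j k
  simp only [Umat, bareMatrix, rowFactor, jump, Matrix.add_apply, Matrix.sub_apply, of_apply,
    vecMulVec_apply]
  ring

lemma one_add_U1mat (lp : ℂ) :
    1 + U1mat c μ lam lp =
      bareMatrix c μ lam - vecMulVec (rowFactor c μ lam) fun k => Kk c lp (lam k) := by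
  ext j k
  simp only [U1mat, bareMatrix, rowFactor, jump, Matrix.add_apply, Matrix.sub_apply, of_apply,
    vecMulVec_apply]
  ring

lemma jump_mul_rowFactor {j : Fin M}
    (hj : Vp c μ lam (lam j) ≠ Vm c μ lam (lam j)) :
    jump c μ lam j * rowFactor c μ lam j = I * Xi μ lam j := by
  have hjump : jump c μ lam j ≠ 0 := sub_ne_zero.mpr hj
  rw [rowFactor, ← mul_assoc, mul_div_cancel₀ _ hjump]

end RankOnePerturbations

-- `Ξ_j` is written with the differences `λ_m - λ_j`, so the nodes are the `-λ_j`.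
lemma Xi_eq_nodalWeight_mul_eval {N M : ℕ} (μ : Fin N → ℂ) (lam : Fin M → ℂ) (j : Fin M) :
    Xi μ lam j = nodalWeight univ (-lam) j * (nodal univ (-μ)).eval ((-lam) j) := by
  simp [Xi, nodalWeight, eval_nodal, div_eq_inv_mul, neg_add_eq_sub]

variable {N : ℕ} {c : ℂ} {μ lam : Fin N → ℂ}

lemma sum_Xi (hinj : Function.Injective lam) :
    ∑ j, Xi μ lam j = ∑ j, μ j - ∑ j, lam j := by
  have hnext : (nodal univ (-μ)).nextCoeff = ∑ j, μ j := by
    rw [nodal, prod_X_sub_C_nextCoeff, ← Finset.sum_neg_distrib]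
    simp only [Pi.neg_apply, neg_neg]
  have hneg : Function.Injective (-lam) := neg_injective.comp hinj
  simp_rw [Xi_eq_nodalWeight_mul_eval]
  rw [sum_nodalWeight_mul_eval hneg.injOn nodal_monic natDegree_nodal, hnext]
  simp only [Pi.neg_apply, Finset.sum_neg_distrib, sub_eq_add_neg]

lemma prod_sub_div_prod_sub (hinj : Function.Injective lam) {z : ℂ} (hz : ∀ j, lam j - z ≠ 0) :
    (∏ m, (μ m - z)) / ∏ m, (lam m - z) = 1 + ∑ j, Xi μ lam j * (lam j - z)⁻¹ := by
  have hnode : ∀ j ∈ (univ : Finset (Fin N)), -z ≠ (-lam) j := fun j _ h =>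
    hz j (sub_eq_zero.mpr (neg_injective h).symm)
  have hneg : Function.Injective (-lam) := neg_injective.comp hinj
  have hfrac := eval_div_eval_nodal hneg.injOn
    (nodal_monic (s := univ) (v := -μ)) natDegree_nodal hnode
  simp_rw [← Xi_eq_nodalWeight_mul_eval] at hfrac
  simpa [eval_nodal, neg_add_eq_sub] using hfrac

lemma sq_add_sq_eq_mul (c a : ℂ) : a ^ 2 + c ^ 2 = (a + I * c) * (a - I * c) := by
  linear_combination c ^ 2 * I_sq

lemma Kk_comm (c x y : ℂ) : Kk c x y = Kk c y x := by
  rw [Kk, Kk, sub_sq_comm]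

lemma inv_sub_inv_eq_neg_I_mul_Kk {x y : ℂ} (h : (x - y) ^ 2 + c ^ 2 ≠ 0) :
    (y - x + I * c)⁻¹ - (y - x - I * c)⁻¹ = -I * Kk c x y := by
  rw [sub_sq_comm, sq_add_sq_eq_mul] at h
  rw [inv_sub_inv (left_ne_zero_of_mul h) (right_ne_zero_of_mul h), Kk, sub_sq_comm,
    sq_add_sq_eq_mul]
  ring

lemma Vp_sub_Vm (hinj : Function.Injective lam) {x : ℂ}
    (hx : ∀ j, (x - lam j) ^ 2 + c ^ 2 ≠ 0) :
    Vp c μ lam x - Vm c μ lam x = -I * ∑ j, Xi μ lam j * Kk c x (lam j) := by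
  have hne : ∀ j, (lam j - x + I * c) * (lam j - x - I * c) ≠ 0 := fun j => by
    rw [← sq_add_sq_eq_mul, sub_sq_comm]
    exact hx j
  have hplus := prod_sub_div_prod_sub (μ := μ) hinj (z := x - I * c) fun j => by
    rw [← sub_add]
    exact left_ne_zero_of_mul (hne j)
  have hminus := prod_sub_div_prod_sub (μ := μ) hinj (z := x + I * c) fun j => by
    rw [← sub_sub]
    exact right_ne_zero_of_mul (hne j)
  simp only [← sub_add, ← sub_sub] at hplus hminus
  rw [Vp, Vm, hplus, hminus, add_sub_add_left_eq_sub, ← Finset.sum_sub_distrib, Finset.mul_sum]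
  refine Finset.sum_congr rfl fun j _ => ?_
  rw [← mul_sub, inv_sub_inv_eq_neg_I_mul_Kk (hx j), mul_left_comm]

lemma jump_dotProduct_rowFactor (hV : ∀ j, Vp c μ lam (lam j) ≠ Vm c μ lam (lam j))
    (hinj : Function.Injective lam) :
    jump c μ lam ⬝ᵥ rowFactor c μ lam = I * (∑ j, μ j - ∑ j, lam j) := by
  simp_rw [dotProduct, jump_mul_rowFactor (hV _), ← Finset.mul_sum, sum_Xi hinj]

lemma jump_dotProduct_rowFactor_mul_Kk (hV : ∀ j, Vp c μ lam (lam j) ≠ Vm c μ lam (lam j))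
    (hinj : Function.Injective lam) {x : ℂ} (hx : ∀ j, (x - lam j) ^ 2 + c ^ 2 ≠ 0) :
    (jump c μ lam ⬝ᵥ fun j => rowFactor c μ lam j * Kk c x (lam j)) =
      -(Vp c μ lam x - Vm c μ lam x) := by
  simp_rw [dotProduct, ← mul_assoc, jump_mul_rowFactor (hV _), mul_assoc, ← Finset.mul_sum,
    Vp_sub_Vm hinj hx, neg_mul, neg_neg]

lemma jump_vecMul_bareMatrix (hV : ∀ j, Vp c μ lam (lam j) ≠ Vm c μ lam (lam j))
    (hinj : Function.Injective lam) (hlam : ∀ j k, (lam j - lam k) ^ 2 + c ^ 2 ≠ 0) :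
    jump c μ lam ᵥ* bareMatrix c μ lam = 0 := by
  ext k
  have hkernel := jump_dotProduct_rowFactor_mul_Kk hV hinj (hlam k)
  simp_rw [Kk_comm c (lam k)] at hkernel
  rw [bareMatrix, vecMul_add, vecMul_one]
  exact add_eq_zero_iff_eq_neg'.mpr hkernel

lemma sum_sub_mul_det_one_add_Umat (hV : ∀ j, Vp c μ lam (lam j) ≠ Vm c μ lam (lam j))
    (hinj : Function.Injective lam) (hlam : ∀ j k, (lam j - lam k) ^ 2 + c ^ 2 ≠ 0)
    (lp : ℂ) {ls : ℂ} (hls : ∀ j, (ls - lam j) ^ 2 + c ^ 2 ≠ 0) :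
    (∑ j, lam j - ∑ j, μ j) * (1 + Umat c μ lam lp ls).det =
      -I * (Vp c μ lam ls - Vm c μ lam ls) * (1 + U1mat c μ lam lp).det := by
  have hdet := dotProduct_mul_det_sub_vecMulVec (jump_vecMul_bareMatrix hV hinj hlam)
    (fun j => rowFactor c μ lam j * Kk c ls (lam j)) (rowFactor c μ lam)
    fun k => Kk c lp (lam k)
  rw [jump_dotProduct_rowFactor hV hinj, jump_dotProduct_rowFactor_mul_Kk hV hinj hls,
    ← one_add_Umat, ← one_add_U1mat] at hdet
  linear_combination I * hdet +
    (∑ j, lam j - ∑ j, μ j) * (1 + Umat c μ lam lp ls).det * I_sq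

end LL

/-- Equivalence of the two determinant formulas for the form factor of `(Ψ†(0))²Ψ²(0)`
when the two states have different total momentum `P_λ ≠ P_μ`. -/
theorem F_eq_different_momentum {N : ℕ} (hN : 1 ≤ N) (c : ℂ) (hc : c ≠ 0)
    (μ lam : Fin N → ℂ) (hinj : Function.Injective lam)
    (hmulam : ∀ k j, μ k ≠ lam j)
    (hpm : ∀ j k, lam j - lam k + I * c ≠ 0 ∧ lam j - lam k - I * c ≠ 0)
    (lp ls : ℂ)
    (hp1 : ∀ j, (lp - lam j) ^ 2 + c ^ 2 ≠ 0)
    (hs1 : ∀ j, (ls - lam j) ^ 2 + c ^ 2 ≠ 0)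
    (hV : ∀ j, Vp c μ lam (lam j) ≠ Vm c μ lam (lam j))
    (hVp : Vp c μ lam lp ≠ Vm c μ lam lp)
    (hVs : Vp c μ lam ls ≠ Vm c μ lam ls)
    (hP : ∑ j, lam j ≠ ∑ j, μ j) :
    (-1 : ℂ) ^ N * (Jcal μ lam / (6 * c)) *
        ((∏ j, ∏ k, (lam j - lam k + I * c)) * ∏ j, ∏ k, (lam j - μ k)⁻¹) *
        (∏ j, (Vp c μ lam (lam j) - Vm c μ lam (lam j))) *
        (1 + Umat c μ lam lp ls).det /
        ((Vp c μ lam lp - Vm c μ lam lp) * (Vp c μ lam ls - Vm c μ lam ls)) =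
      (-1 : ℂ) ^ (N + 1) *
        (I * Jcal μ lam / (6 * c * (∑ j, lam j - ∑ j, μ j))) *
        ((∏ j, ∏ k, (lam j - lam k + I * c)) * ∏ j, ∏ k, (lam j - μ k)⁻¹) *
        (∏ j, (Vp c μ lam (lam j) - Vm c μ lam (lam j))) *
        (1 + U1mat c μ lam lp).det /
        (Vp c μ lam lp - Vm c μ lam lp) := by
  have hlam : ∀ j k, (lam j - lam k) ^ 2 + c ^ 2 ≠ 0 := fun j k => by
    rw [sq_add_sq_eq_mul]
    exact mul_ne_zero (hpm j k).1 (hpm j k).2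
  have hdet := sum_sub_mul_det_one_add_Umat hV hinj hlam lp hs1
  have hP' : ∑ j, lam j - ∑ j, μ j ≠ 0 := sub_ne_zero.mpr hP
  have hVs' : Vp c μ lam ls - Vm c μ lam ls ≠ 0 := sub_ne_zero.mpr hVs
  have hVp' : Vp c μ lam lp - Vm c μ lam lp ≠ 0 := sub_ne_zero.mpr hVp
  rw [eq_div_of_mul_eq hP' ((mul_comm _ _).trans hdet), pow_succ]
  field_simp
end
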